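/- (Incompleteness with the additive constant 0) Extend acLL with the constant 0 and the rule 0L: R{0} ⊢ C for any context R and formula C, and let the label a satisfy C, W, E ∈ f(a). The sequent !^a((r←(0→q))←p), (s←p)→0 ⊢ r is not provable in this extended intuitionistic system, yet its translation (with 0̂ = 0), namely ⊢ ((⊤⊗(s⅋p⊥), ?^a(p⊗((⊤⅋q)⊗r⊥))), r), is provable in CacLL. Hence conservativity fails in the presence of 0. -/

import Mathlib

set_option autoImplicit false

namespace NACLL

/-- Structures: binary trees whose leaves are formulas, with an empty structure.
`(∅,Γ)` and `(Γ,∅)` are identified with `Γ` via the smart constructor `comma`. -/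
inductive Struct (F : Type) : Type where
  | emp : Struct F
  | leaf : F → Struct F
  | pair : Struct F → Struct F → Struct F

namespace Struct

/-- Pairing of structures, erasing empty substructures. -/
def comma {F : Type} : Struct F → Struct F → Struct F
  | .emp, Δ => Δ
  | Γ, .emp => Γ
  | Γ, Δ => .pair Γ Δ

def map {F G : Type} (f : F → G) : Struct F → Struct G
  | .emp => .emp
  | .leaf a => .leaf (f a)
  | .pair l r => .pair (map f l) (map f r)

/-- Number of formula leaves of a structure. -/
def nleaves {F : Type} : Struct F → ℕ
  | .emp => 0
  | .leaf _ => 1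
  | .pair l r => nleaves l + nleaves r

/-- All formula leaves of a structure satisfy a predicate. -/
def Forall {F : Type} (p : F → Prop) : Struct F → Prop
  | .emp => True
  | .leaf a => p a
  | .pair l r => Forall p l ∧ Forall p r

end Struct

/-- Structural equivalence: the reflexive, symmetric, transitive closure of
top-level exchange and top-level associativity. -/
inductive StEquiv {F : Type} : Struct F → Struct F → Prop where
  | refl (Γ : Struct F) : StEquiv Γ Γ
  | symm {Γ Δ : Struct F} : StEquiv Γ Δ → StEquiv Δ Γ
  | trans {Γ Δ Θ : Struct F} : StEquiv Γ Δ → StEquiv Δ Θ → StEquiv Γ Θ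
  | exch (Γ Δ : Struct F) : StEquiv (Γ.comma Δ) (Δ.comma Γ)
  | assoc (Γ Δ Θ : Struct F) : StEquiv (Γ.comma (Δ.comma Θ)) ((Γ.comma Δ).comma Θ)

/-- Contexts with one hole. -/
inductive Ctx (F : Type) : Type where
  | hole : Ctx F
  | pairL : Ctx F → Struct F → Ctx F
  | pairR : Struct F → Ctx F → Ctx F

namespace Ctx

/-- Filling the hole of a context with a structure (empty substructures are erased). -/
def fill {F : Type} : Ctx F → Struct F → Struct F
  | .hole, Ξ => Ξ
  | .pairL R Δ, Ξ => (fill R Ξ).comma Δ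
  | .pairR Γ R, Ξ => Γ.comma (fill R Ξ)

/-- A context viewed as a structure over `Option F`, the hole being the leaf `none`. -/
def toStruct {F : Type} : Ctx F → Struct (Option F)
  | .hole => .leaf none
  | .pairL R Δ => (toStruct R).comma (Δ.map some)
  | .pairR Γ R => (Γ.map some).comma (toStruct R)

def size {F : Type} : Ctx F → ℕ
  | .hole => 0
  | .pairL R _ => size R + 2
  | .pairR _ R => size R + 1

/-- The designator. -/
def desi {F : Type} : Ctx F → Struct F
  | .hole => .emp
  | .pairL R Δ => desi (.pairR Δ R)
  | .pairR Γ .hole => Γ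
  | .pairR Γ (.pairR Δ P) => desi (.pairR (Γ.comma Δ) P)
  | .pairR Γ (.pairL D Θp) => desi (.pairR (Θp.comma Γ) D)
termination_by c => size c
decreasing_by all_goals simp [size]

/-- All formula leaves of a context (other than the hole) satisfy a predicate. -/
def Forall {F : Type} (p : F → Prop) : Ctx F → Prop
  | .hole => True
  | .pairL R Δ => Forall p R ∧ Δ.Forall p
  | .pairR Γ R => Γ.Forall p ∧ Forall p R

end Ctx

/-- Structural equivalence of one-hole contexts, treating the hole as a leaf. -/
def CtxEquiv {F : Type} (T X : Ctx F) : Prop := StEquiv T.toStruct X.toStruct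

/-- Contexts with two holes (the first hole is the designated one). -/
inductive Ctx2 (F : Type) : Type where
  | splitLR : Ctx F → Ctx F → Ctx2 F
  | splitRL : Ctx F → Ctx F → Ctx2 F
  | pairL : Ctx2 F → Struct F → Ctx2 F
  | pairR : Struct F → Ctx2 F → Ctx2 F

namespace Ctx2

/-- Filling the first hole of a two-hole context, yielding a one-hole context. -/
def fillFst {F : Type} : Ctx2 F → Struct F → Ctx F
  | .splitLR c1 c2, Δ => .pairR (c1.fill Δ) c2
  | .splitRL c2 c1, Δ => .pairL c2 (c1.fill Δ)
  | .pairL R Γ, Δ => .pairL (fillFst R Δ) Γ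
  | .pairR Γ R, Δ => .pairR Γ (fillFst R Δ)

end Ctx2

end NACLL
namespace NACLL

/-- Structural axioms that a subexponential may license. -/
inductive SubAx : Type where
  | C : SubAx
  | W : SubAx
  | E : SubAx
  | A1 : SubAx
  | A2 : SubAx
deriving DecidableEq

/-- A subexponential signature: a preordered set of indices together with an
upwardly closed assignment of licensed structural axioms. -/
structure Sig (I : Type) where
  le : I → I → Prop
  le_refl : ∀ i, le i i
  le_trans : ∀ {i j k}, le i j → le j k → le i k
  f : I → Set SubAx
  upclosed : ∀ {i j}, le i j → f i ⊆ f j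

/-- Formulas of classical non-associative non-commutative multimodal linear logic. -/
inductive CForm (I : Type) : Type where
  | pos : ℕ → CForm I
  | neg : ℕ → CForm I
  | tensor : CForm I → CForm I → CForm I
  | par : CForm I → CForm I → CForm I
  | one : CForm I
  | bot : CForm I
  | oplus : CForm I → CForm I → CForm I
  | with' : CForm I → CForm I → CForm I
  | zero : CForm I
  | top : CForm I
  | bang : I → CForm I → CForm I
  | quest : I → CForm I → CForm I

namespace CForm

/-- De Morgan dual, pushed to atomic scope (order-reversing on the multiplicatives). -/
def dual {I : Type} : CForm I → CForm I
  | .pos a => .neg a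
  | .neg a => .pos a
  | .tensor A B => .par (dual B) (dual A)
  | .par A B => .tensor (dual B) (dual A)
  | .one => .bot
  | .bot => .one
  | .oplus A B => .with' (dual A) (dual B)
  | .with' A B => .oplus (dual A) (dual B)
  | .zero => .top
  | .top => .zero
  | .bang i A => .quest i (dual A)
  | .quest i A => .bang i (dual A)

/-- The counter ♮ on formulas. -/
def counter {I : Type} : CForm I → ℤ
  | .pos _ => 0
  | .neg _ => 1
  | .tensor A B => counter A + counter B
  | .par A B => counter A + counter B - 1
  | .one => 0
  | .bot => 1
  | .oplus A _ => counter A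
  | .with' A _ => counter A
  | .zero => 1
  | .top => 0
  | .bang _ A => counter A
  | .quest _ A => counter A

end CForm

/-- The counter ♮ extended to structures. -/
def Struct.counter {I : Type} : Struct (CForm I) → ℤ
  | .emp => 0
  | .leaf A => A.counter
  | .pair l r => counter l + counter r

/-- All leaves of a (nonempty) structure are `?ᵏ`-formulas whose label licenses
the given structural axiom. -/
inductive QAll {I : Type} (σ : Sig I) (ax : SubAx) : Struct (CForm I) → Prop where
  | leaf {k : I} {F : CForm I} (h : ax ∈ σ.f k) : QAll σ ax (.leaf (.quest k F))
  | pair {Γ Δ : Struct (CForm I)} : QAll σ ax Γ → QAll σ ax Δ → QAll σ ax (.pair Γ Δ)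

/-- `UpSet σ i Γ Γ'` holds iff `Γ^{↑i}` is defined and equal to `Γ'`:
every leaf of `Γ` is a `?ᵏ`-formula which is kept when `i ⪯ k` and erased when
`i ⋠ k` and `W ∈ f(k)`. -/
inductive UpSet {I : Type} (σ : Sig I) (i : I) : Struct (CForm I) → Struct (CForm I) → Prop where
  | emp : UpSet σ i .emp .emp
  | keep {k : I} {F : CForm I} (h : σ.le i k) :
      UpSet σ i (.leaf (.quest k F)) (.leaf (.quest k F))
  | drop {k : I} {F : CForm I} (h1 : ¬ σ.le i k) (h2 : SubAx.W ∈ σ.f k) :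
      UpSet σ i (.leaf (.quest k F)) .emp
  | pair {Γ Γ' Δ Δ' : Struct (CForm I)} :
      UpSet σ i Γ Γ' → UpSet σ i Δ Δ' → UpSet σ i (.pair Γ Δ) (Γ'.comma Δ')

/-- Structures over `Option F` serve as multi-hole contexts: `none`-leaves are
holes. `fillAll T D` fills every hole with `D` (erasing empty substructures). -/
def fillAll {F : Type} : Struct (Option F) → Struct F → Struct F
  | .emp, _ => .emp
  | .leaf (some a), _ => .leaf a
  | .leaf none, D => D
  | .pair l r, D => (fillAll l D).comma (fillAll r D)

/-- Derivability in the one-sided classical sequent calculus CacLL over the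
signature `σ`.  The Boolean flag indicates whether the cut rule may be used:
`CDer σ false` is cut-free CacLL, `CDer σ true` is CacLL extended with cut. -/
inductive CDer {I : Type} (σ : Sig I) : Bool → Struct (CForm I) → Prop where
  | initP {b : Bool} (a : ℕ) :
      CDer σ b (.pair (.leaf (.pos a)) (.leaf (.neg a)))
  | initN {b : Bool} (a : ℕ) :
      CDer σ b (.pair (.leaf (.neg a)) (.leaf (.pos a)))
  | tensor {b : Bool} {Γ Δ : Struct (CForm I)} {F G : CForm I} :
      CDer σ b (Γ.comma (.leaf G)) → CDer σ b (Δ.comma (.leaf F)) →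
      CDer σ b ((Γ.comma Δ).comma (.leaf (.tensor F G)))
  | par {b : Bool} (R : Ctx (CForm I)) {F G : CForm I} :
      CDer σ b (R.fill (.pair (.leaf F) (.leaf G))) →
      CDer σ b (R.fill (.leaf (.par F G)))
  | oplus₁ {b : Bool} (R : Ctx (CForm I)) {F1 F2 : CForm I} :
      CDer σ b (R.fill (.leaf F1)) → CDer σ b (R.fill (.leaf (.oplus F1 F2)))
  | oplus₂ {b : Bool} (R : Ctx (CForm I)) {F1 F2 : CForm I} :
      CDer σ b (R.fill (.leaf F2)) → CDer σ b (R.fill (.leaf (.oplus F1 F2)))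
  | with' {b : Bool} (R : Ctx (CForm I)) {F1 F2 : CForm I} :
      CDer σ b (R.fill (.leaf F1)) → CDer σ b (R.fill (.leaf F2)) →
      CDer σ b (R.fill (.leaf (.with' F1 F2)))
  | bot {b : Bool} (R : Ctx (CForm I)) :
      CDer σ b (R.fill .emp) → CDer σ b (R.fill (.leaf .bot))
  | one {b : Bool} : CDer σ b (.leaf .one)
  | top {b : Bool} (R : Ctx (CForm I)) : CDer σ b (R.fill (.leaf .top))
  | exch {b : Bool} {Γ Δ : Struct (CForm I)} :
      CDer σ b (Δ.comma Γ) → CDer σ b (Γ.comma Δ)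
  | assoc₁ {b : Bool} {Γ Δ Θ : Struct (CForm I)} :
      CDer σ b (Γ.comma (Δ.comma Θ)) → CDer σ b ((Γ.comma Δ).comma Θ)
  | assoc₂ {b : Bool} {Γ Δ Θ : Struct (CForm I)} :
      CDer σ b ((Γ.comma Δ).comma Θ) → CDer σ b (Γ.comma (Δ.comma Θ))
  | prom {b : Bool} {Γ Γ' : Struct (CForm I)} {i : I} {F : CForm I} :
      UpSet σ i Γ Γ' → CDer σ b (Γ'.comma (.leaf F)) →
      CDer σ b (Γ.comma (.leaf (.bang i F)))
  | der {b : Bool} (R : Ctx (CForm I)) {i : I} {F : CForm I} :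
      CDer σ b (R.fill (.leaf F)) → CDer σ b (R.fill (.leaf (.quest i F)))
  | qA1 {b : Bool} {Δ1 Δ2 Δ3 Γ : Struct (CForm I)} (h : QAll σ .A1 Γ) :
      CDer σ b (((Δ1.comma Δ2).comma Δ3).comma Γ) →
      CDer σ b ((Δ1.comma (Δ2.comma Δ3)).comma Γ)
  | qA2 {b : Bool} {Δ1 Δ2 Δ3 Γ : Struct (CForm I)} (h : QAll σ .A2 Γ) :
      CDer σ b ((Δ1.comma (Δ2.comma Δ3)).comma Γ) →
      CDer σ b (((Δ1.comma Δ2).comma Δ3).comma Γ)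
  | qE {b : Bool} {Δ1 Δ2 Γ : Struct (CForm I)} (h : QAll σ .E Γ) :
      CDer σ b ((Δ2.comma Δ1).comma Γ) → CDer σ b ((Δ1.comma Δ2).comma Γ)
  | qW {b : Bool} (R : Ctx (CForm I)) {Δ : Struct (CForm I)} (h : QAll σ .W Δ) :
      CDer σ b (R.fill .emp) → CDer σ b (R.fill Δ)
  | qC {b : Bool} (R : Ctx2 (CForm I)) {Δ : Struct (CForm I)} (h : QAll σ .C Δ) :
      CDer σ b ((R.fillFst Δ).fill Δ) → CDer σ b ((R.fillFst .emp).fill Δ)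
  | cut {Γ Δ : Struct (CForm I)} {A : CForm I} :
      CDer σ true (Γ.comma (.leaf A)) → CDer σ true ((Struct.leaf A.dual).comma Δ) →
      CDer σ true (Γ.comma Δ)

end NACLL

namespace NACLL

/-- Formulas of acLL extended with the additive constant `0`. -/
inductive IForm0 (I : Type) : Type where
  | atom : ℕ → IForm0 I
  | tensor : IForm0 I → IForm0 I → IForm0 I
  | imp : IForm0 I → IForm0 I → IForm0 I    -- `imp A B` is A → B
  | limp : IForm0 I → IForm0 I → IForm0 I   -- `limp B A` is B ← A
  | oplus : IForm0 I → IForm0 I → IForm0 I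
  | with' : IForm0 I → IForm0 I → IForm0 I
  | one : IForm0 I
  | top : IForm0 I
  | zero : IForm0 I
  | bang : I → IForm0 I → IForm0 I

/-- The positive translation, extended by `0̂ = 0`. -/
def IForm0.pos {I : Type} : IForm0 I → CForm I
  | .atom a => .pos a
  | .tensor A B => .tensor A.pos B.pos
  | .imp A B => .par A.pos.dual B.pos
  | .limp B A => .par B.pos A.pos.dual
  | .oplus A B => .oplus A.pos B.pos
  | .with' A B => .with' A.pos B.pos
  | .one => .one
  | .top => .top
  | .zero => .zero
  | .bang i A => .bang i A.pos

/-- The negative translation of structures (order-reversing, dualizing leaves). -/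
def negTrans0 {I : Type} : Struct (IForm0 I) → Struct (CForm I)
  | .emp => .emp
  | .leaf A => .leaf A.pos.dual
  | .pair Γ Δ => (negTrans0 Δ).comma (negTrans0 Γ)

inductive BAll0 {I : Type} (σ : Sig I) (ax : SubAx) : Struct (IForm0 I) → Prop where
  | leaf {k : I} {F : IForm0 I} (h : ax ∈ σ.f k) : BAll0 σ ax (.leaf (.bang k F))
  | pair {Γ Δ : Struct (IForm0 I)} : BAll0 σ ax Γ → BAll0 σ ax Δ → BAll0 σ ax (.pair Γ Δ)

inductive IUpSet0 {I : Type} (σ : Sig I) (i : I) : Struct (IForm0 I) → Struct (IForm0 I) → Prop where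
  | emp : IUpSet0 σ i .emp .emp
  | keep {k : I} {F : IForm0 I} (h : σ.le i k) :
      IUpSet0 σ i (.leaf (.bang k F)) (.leaf (.bang k F))
  | drop {k : I} {F : IForm0 I} (h1 : ¬ σ.le i k) (h2 : SubAx.W ∈ σ.f k) :
      IUpSet0 σ i (.leaf (.bang k F)) .emp
  | pair {Γ Γ' Δ Δ' : Struct (IForm0 I)} :
      IUpSet0 σ i Γ Γ' → IUpSet0 σ i Δ Δ' → IUpSet0 σ i (.pair Γ Δ) (Γ'.comma Δ')

/-- Derivability in acLL extended with the constant `0` and the rule `0L`. -/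
inductive IDer0 {I : Type} (σ : Sig I) : Struct (IForm0 I) → IForm0 I → Prop where
  | init (A : IForm0 I) : IDer0 σ (.leaf A) A
  | zeroL (R : Ctx (IForm0 I)) (C : IForm0 I) : IDer0 σ (R.fill (.leaf .zero)) C
  | tensorL (R : Ctx (IForm0 I)) {A B C : IForm0 I} :
      IDer0 σ (R.fill (.pair (.leaf A) (.leaf B))) C →
      IDer0 σ (R.fill (.leaf (.tensor A B))) C
  | tensorR {Γ Δ : Struct (IForm0 I)} {A B : IForm0 I} :
      IDer0 σ Γ A → IDer0 σ Δ B → IDer0 σ (Γ.comma Δ) (.tensor A B)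
  | impL (R : Ctx (IForm0 I)) {Δ : Struct (IForm0 I)} {A B C : IForm0 I} :
      IDer0 σ Δ A → IDer0 σ (R.fill (.leaf B)) C →
      IDer0 σ (R.fill (Δ.comma (.leaf (.imp A B)))) C
  | impR {Γ : Struct (IForm0 I)} {A B : IForm0 I} :
      IDer0 σ ((Struct.leaf A).comma Γ) B → IDer0 σ Γ (.imp A B)
  | limpL (R : Ctx (IForm0 I)) {Δ : Struct (IForm0 I)} {A B C : IForm0 I} :
      IDer0 σ Δ A → IDer0 σ (R.fill (.leaf B)) C →
      IDer0 σ (R.fill ((Struct.leaf (.limp B A)).comma Δ)) C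
  | limpR {Γ : Struct (IForm0 I)} {A B : IForm0 I} :
      IDer0 σ (Γ.comma (.leaf A)) B → IDer0 σ Γ (.limp B A)
  | oplusL (R : Ctx (IForm0 I)) {A B C : IForm0 I} :
      IDer0 σ (R.fill (.leaf A)) C → IDer0 σ (R.fill (.leaf B)) C →
      IDer0 σ (R.fill (.leaf (.oplus A B))) C
  | oplusR₁ {Γ : Struct (IForm0 I)} {A B : IForm0 I} : IDer0 σ Γ A → IDer0 σ Γ (.oplus A B)
  | oplusR₂ {Γ : Struct (IForm0 I)} {A B : IForm0 I} : IDer0 σ Γ B → IDer0 σ Γ (.oplus A B)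
  | withL₁ (R : Ctx (IForm0 I)) {A B C : IForm0 I} :
      IDer0 σ (R.fill (.leaf A)) C → IDer0 σ (R.fill (.leaf (.with' A B))) C
  | withL₂ (R : Ctx (IForm0 I)) {A B C : IForm0 I} :
      IDer0 σ (R.fill (.leaf B)) C → IDer0 σ (R.fill (.leaf (.with' A B))) C
  | withR {Γ : Struct (IForm0 I)} {A B : IForm0 I} :
      IDer0 σ Γ A → IDer0 σ Γ B → IDer0 σ Γ (.with' A B)
  | oneL (R : Ctx (IForm0 I)) {C : IForm0 I} :
      IDer0 σ (R.fill .emp) C → IDer0 σ (R.fill (.leaf .one)) C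
  | oneR : IDer0 σ .emp .one
  | topR (Γ : Struct (IForm0 I)) : IDer0 σ Γ .top
  | prom {Γ Γ' : Struct (IForm0 I)} {i : I} {A : IForm0 I} :
      IUpSet0 σ i Γ Γ' → IDer0 σ Γ' A → IDer0 σ Γ (.bang i A)
  | der (R : Ctx (IForm0 I)) {i : I} {A C : IForm0 I} :
      IDer0 σ (R.fill (.leaf A)) C → IDer0 σ (R.fill (.leaf (.bang i A))) C
  | wk (R : Ctx (IForm0 I)) {Δ : Struct (IForm0 I)} {C : IForm0 I} (h : BAll0 σ .W Δ) :
      IDer0 σ (R.fill .emp) C → IDer0 σ (R.fill Δ) C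
  | ctr (R : Ctx2 (IForm0 I)) {Δ : Struct (IForm0 I)} {C : IForm0 I} (h : BAll0 σ .C Δ) :
      IDer0 σ ((R.fillFst Δ).fill Δ) C → IDer0 σ ((R.fillFst .emp).fill Δ) C
  | e1 (R : Ctx (IForm0 I)) {Δ Θ : Struct (IForm0 I)} {C : IForm0 I} (h : BAll0 σ .E Δ) :
      IDer0 σ (R.fill (Θ.comma Δ)) C → IDer0 σ (R.fill (Δ.comma Θ)) C
  | e2 (R : Ctx (IForm0 I)) {Δ Θ : Struct (IForm0 I)} {C : IForm0 I} (h : BAll0 σ .E Δ) :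
      IDer0 σ (R.fill (Δ.comma Θ)) C → IDer0 σ (R.fill (Θ.comma Δ)) C
  | a1 (R : Ctx (IForm0 I)) {Δ1 Δ2 Δ3 : Struct (IForm0 I)} {C : IForm0 I} (h : BAll0 σ .A1 Δ1) :
      IDer0 σ (R.fill ((Δ1.comma Δ2).comma Δ3)) C →
      IDer0 σ (R.fill (Δ1.comma (Δ2.comma Δ3))) C
  | a2 (R : Ctx (IForm0 I)) {Δ1 Δ2 Δ3 : Struct (IForm0 I)} {C : IForm0 I} (h : BAll0 σ .A2 Δ3) :
      IDer0 σ (R.fill (Δ1.comma (Δ2.comma Δ3))) C →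
      IDer0 σ (R.fill ((Δ1.comma Δ2).comma Δ3)) C

/-- The formula `!ᵃ((r ← (0 → q)) ← p)`, with `p,q,r,s` the atoms `0,1,2,3`. -/
def zeroF1 {I : Type} (a : I) : IForm0 I :=
  .bang a (.limp (.limp (.atom 2) (.imp .zero (.atom 1))) (.atom 0))

/-- The formula `(s ← p) → 0`. -/
def zeroF2 {I : Type} : IForm0 I :=
  .imp (.limp (.atom 3) (.atom 0)) .zero

/-!
Unprovability: interpret formulas as subsets of a unital magma `M`, the comma as the pointwise
product, the implications as the residuals of that product, `0` as `∅`, and `!A` as the part of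
`A` lying in `{1}`. So `!A` is `∅` or `{1}`, and both satisfy every structural rule, whatever the
labels license; hence the calculus is sound. In the multiplicative monoid `ℕ`, let `s` be `∅` and
every other atom `{0}`. No number `x` satisfies `x * 0 ∈ ∅`, so `s ← p` is empty and `(s ← p) → 0`
is everything; as the number `0` is absorbing, both antecedents contain `1`, whereas `r` does not.

Provability: in the one-sided calculus, `⊤` (the dual of `0`) swallows any structure, in particular
the `s` released by `s ⅋ p⊥`. Contraction and weakening then carry the `?ᵃ`-formula inside to the
`p⊥`, which two-sidedly means using `p` outside the subderivation of `s` in which it was assumed.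
-/

section Semantics

open scoped Pointwise

variable {I : Type} {M : Type*} [MulOneClass M]

namespace IForm0

/-- The interpretation of a formula as a subset of a unital magma, for a valuation `v` of the
atoms; `imp` and `limp` are the two residuals of the pointwise product. -/
def sem (v : ℕ → Set M) : IForm0 I → Set M
  | .atom n => v n
  | .tensor A B => sem v A * sem v B
  | .imp A B => {y | ∀ x ∈ sem v A, x * y ∈ sem v B}
  | .limp B A => {x | ∀ y ∈ sem v A, x * y ∈ sem v B}
  | .oplus A B => sem v A ∪ sem v B
  | .with' A B => sem v A ∩ sem v B
  | .one => 1
  | .top => Set.univ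
  | .zero => ∅
  | .bang _ A => 1 ∩ sem v A

variable {v : ℕ → Set M} {A B : IForm0 I} {X : Set M}

theorem subset_sem_imp : X ⊆ (imp A B).sem v ↔ A.sem v * X ⊆ B.sem v :=
  ⟨fun h => Set.mul_subset_iff.2 fun x hx _ hy => h hy x hx,
    fun h _ hy _ hx => h (Set.mul_mem_mul hx hy)⟩

theorem subset_sem_limp : X ⊆ (limp B A).sem v ↔ X * A.sem v ⊆ B.sem v :=
  Set.mul_subset_iff.symm

end IForm0

/-- The interpretation of a structure: the comma is the pointwise product and the empty structure
its unit. -/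
def Struct.sem (v : ℕ → Set M) : Struct (IForm0 I) → Set M
  | .emp => 1
  | .leaf A => A.sem v
  | .pair Γ Δ => sem v Γ * sem v Δ

/-- The interpretation of a context: the operation on subsets of `M` that filling its hole
induces, see `Ctx.sem_fill`. -/
def Ctx.sem (v : ℕ → Set M) : Ctx (IForm0 I) → Set M → Set M
  | .hole, X => X
  | .pairL R Δ, X => sem v R X * Δ.sem v
  | .pairR Γ R, X => Γ.sem v * sem v R X

variable {v : ℕ → Set M} {σ : Sig I}

namespace Struct

theorem sem_comma (Γ Δ : Struct (IForm0 I)) : (Γ.comma Δ).sem v = Γ.sem v * Δ.sem v := by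
  cases Γ <;> cases Δ <;> simp [comma, sem]

variable {Γ : Struct (IForm0 I)}

theorem sem_comma_comm (h : Γ.sem v ⊆ 1) (Δ : Struct (IForm0 I)) :
    (Γ.comma Δ).sem v = (Δ.comma Γ).sem v := by
  simp only [sem_comma]
  obtain hΓ | hΓ := Set.subset_one_iff_eq.1 h <;> simp [hΓ]

theorem sem_comma_assoc_left (h : Γ.sem v ⊆ 1) (Δ Θ : Struct (IForm0 I)) :
    (Γ.comma (Δ.comma Θ)).sem v = ((Γ.comma Δ).comma Θ).sem v := by
  simp only [sem_comma]
  obtain hΓ | hΓ := Set.subset_one_iff_eq.1 h <;> simp [hΓ]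

theorem sem_comma_assoc_right (h : Γ.sem v ⊆ 1) (Δ Θ : Struct (IForm0 I)) :
    (Δ.comma (Θ.comma Γ)).sem v = ((Δ.comma Θ).comma Γ).sem v := by
  simp only [sem_comma]
  obtain hΓ | hΓ := Set.subset_one_iff_eq.1 h <;> simp [hΓ]

variable {A B : IForm0 I}

theorem sem_comma_imp_subset (h : Γ.sem v ⊆ A.sem v) :
    (Γ.comma (.leaf (.imp A B))).sem v ⊆ B.sem v := by
  rw [sem_comma]
  exact (Set.mul_subset_mul_right h).trans (IForm0.subset_sem_imp.1 subset_rfl)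

theorem sem_limp_comma_subset (h : Γ.sem v ⊆ A.sem v) :
    ((leaf (.limp B A)).comma Γ).sem v ⊆ B.sem v := by
  rw [sem_comma]
  exact (Set.mul_subset_mul_left h).trans (IForm0.subset_sem_limp.1 subset_rfl)

end Struct

namespace Ctx

theorem sem_fill (R : Ctx (IForm0 I)) (Γ : Struct (IForm0 I)) :
    (R.fill Γ).sem v = R.sem v (Γ.sem v) := by
  induction R with
  | hole => rfl
  | pairL R Δ ih => rw [fill, Struct.sem_comma, ih, sem]
  | pairR Δ R ih => rw [fill, Struct.sem_comma, ih, sem]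

theorem sem_empty (R : Ctx (IForm0 I)) : R.sem v ∅ = ∅ := by
  induction R <;> simp_all [sem]

theorem sem_union (R : Ctx (IForm0 I)) (X Y : Set M) :
    R.sem v (X ∪ Y) = R.sem v X ∪ R.sem v Y := by
  induction R <;> simp_all [sem, Set.union_mul, Set.mul_union]

theorem sem_mono (R : Ctx (IForm0 I)) : Monotone (R.sem v) := fun X Y h => by
  rw [← Set.union_eq_self_of_subset_left h, sem_union]
  exact Set.subset_union_left

theorem sem_fill_subset (R : Ctx (IForm0 I)) {Γ Δ : Struct (IForm0 I)} {X : Set M}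
    (h : Γ.sem v ⊆ Δ.sem v) (hΔ : (R.fill Δ).sem v ⊆ X) : (R.fill Γ).sem v ⊆ X := by
  rw [sem_fill] at hΔ ⊢
  exact (R.sem_mono h).trans hΔ

theorem sem_fill_oplus (R : Ctx (IForm0 I)) (A B : IForm0 I) :
    (R.fill (.leaf (.oplus A B))).sem v =
      (R.fill (.leaf A)).sem v ∪ (R.fill (.leaf B)).sem v := by
  simp only [sem_fill]
  exact R.sem_union (A.sem v) (B.sem v)

end Ctx

theorem Ctx2.sem_fillFst_congr (R : Ctx2 (IForm0 I)) {Γ Δ : Struct (IForm0 I)}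
    (h : Γ.sem v = Δ.sem v) (X : Set M) : (R.fillFst Γ).sem v X = (R.fillFst Δ).sem v X := by
  induction R <;> simp_all [fillFst, Ctx.sem, Ctx.sem_fill]

theorem BAll0.sem_subset_one {ax : SubAx} {Δ : Struct (IForm0 I)} (h : BAll0 σ ax Δ) :
    Δ.sem v ⊆ 1 := by
  induction h with
  | leaf _ => exact Set.inter_subset_left
  | pair _ _ ihΓ ihΔ => exact (Set.mul_subset_mul ihΓ ihΔ).trans_eq (mul_one 1)

namespace IUpSet0

variable {i : I} {Γ Γ' : Struct (IForm0 I)}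

theorem sem_subset_one (h : IUpSet0 σ i Γ Γ') : Γ.sem v ⊆ 1 := by
  induction h with
  | emp => exact subset_rfl
  | keep _ => exact Set.inter_subset_left
  | drop _ _ => exact Set.inter_subset_left
  | pair _ _ ihΓ ihΔ => exact (Set.mul_subset_mul ihΓ ihΔ).trans_eq (mul_one 1)

theorem sem_subset (h : IUpSet0 σ i Γ Γ') : Γ.sem v ⊆ Γ'.sem v := by
  induction h with
  | emp => exact subset_rfl
  | keep _ => exact subset_rfl
  | drop _ _ => exact Set.inter_subset_left
  | pair _ _ ihΓ ihΔ => exact (Set.mul_subset_mul ihΓ ihΔ).trans_eq (Struct.sem_comma _ _).symm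

end IUpSet0

theorem Ctx2.sem_contraction (R : Ctx2 (IForm0 I)) {Δ : Struct (IForm0 I)}
    (hΔ : Δ.sem v ⊆ 1) :
    ((R.fillFst .emp).fill Δ).sem v ⊆ ((R.fillFst Δ).fill Δ).sem v := by
  simp only [Ctx.sem_fill]
  obtain hempty | hone := Set.subset_one_iff_eq.1 hΔ
  · simp [hempty, Ctx.sem_empty]
  · have hemp : (Struct.emp : Struct (IForm0 I)).sem v = Δ.sem v := hone.symm
    exact (R.sem_fillFst_congr hemp _).subset

theorem IDer0.sem_subset {Γ : Struct (IForm0 I)} {C : IForm0 I} (h : IDer0 σ Γ C)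
    (v : ℕ → Set M) : Γ.sem v ⊆ C.sem v := by
  induction h with
  | init A => exact subset_rfl
  | zeroL R C => exact (R.sem_fill _).trans_subset (R.sem_empty.trans_subset (Set.empty_subset _))
  | tensorL R _ ih => exact R.sem_fill_subset (Δ := .pair (.leaf _) (.leaf _)) subset_rfl ih
  | tensorR _ _ ihA ihB => exact (Struct.sem_comma _ _).trans_subset (Set.mul_subset_mul ihA ihB)
  | impL R _ _ ihA ih => exact R.sem_fill_subset (Struct.sem_comma_imp_subset ihA) ih
  | impR _ ih => exact IForm0.subset_sem_imp.2 ((Struct.sem_comma _ _).symm.trans_subset ih)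
  | limpL R _ _ ihA ih => exact R.sem_fill_subset (Struct.sem_limp_comma_subset ihA) ih
  | limpR _ ih => exact IForm0.subset_sem_limp.2 ((Struct.sem_comma _ _).symm.trans_subset ih)
  | oplusL R _ _ ihA ihB => exact (R.sem_fill_oplus _ _).trans_subset (Set.union_subset ihA ihB)
  | oplusR₁ _ ih => exact ih.trans Set.subset_union_left
  | oplusR₂ _ ih => exact ih.trans Set.subset_union_right
  | withL₁ R _ ih => exact R.sem_fill_subset Set.inter_subset_left ih
  | withL₂ R _ ih => exact R.sem_fill_subset Set.inter_subset_right ih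
  | withR _ _ ihA ihB => exact Set.subset_inter ihA ihB
  | oneL R _ ih => exact R.sem_fill_subset (Δ := .emp) subset_rfl ih
  | oneR => exact subset_rfl
  | topR Γ => exact Set.subset_univ _
  | prom h _ ih => exact Set.subset_inter h.sem_subset_one (h.sem_subset.trans ih)
  | der R _ ih => exact R.sem_fill_subset Set.inter_subset_right ih
  | wk R h _ ih => exact R.sem_fill_subset h.sem_subset_one ih
  | ctr R h _ ih => exact (R.sem_contraction h.sem_subset_one).trans ih
  | e1 R h _ ih => exact R.sem_fill_subset (Struct.sem_comma_comm h.sem_subset_one _).subset ih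
  | e2 R h _ ih => exact R.sem_fill_subset (Struct.sem_comma_comm h.sem_subset_one _).superset ih
  | a1 R h _ ih =>
    exact R.sem_fill_subset (Struct.sem_comma_assoc_left h.sem_subset_one _ _).subset ih
  | a2 R h _ ih =>
    exact R.sem_fill_subset (Struct.sem_comma_assoc_right h.sem_subset_one _ _).superset ih

/-- The countermodel: a valuation in the multiplicative monoid `ℕ` that sends the atom `s = 3` to
`∅` and every other atom to `{0}`. -/
def counterVal : ℕ → Set ℕ := Function.update (fun _ => {0}) 3 ∅

theorem one_mem_sem_zeroF1 (a : I) : 1 ∈ (zeroF1 a).sem counterVal := by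
  simp [zeroF1, IForm0.sem, counterVal]

theorem one_mem_sem_zeroF2 : 1 ∈ (zeroF2 : IForm0 I).sem counterVal := by
  simp [zeroF2, IForm0.sem, counterVal]

theorem one_notMem_sem_atom_two : 1 ∉ (.atom 2 : IForm0 I).sem counterVal := by
  simp [IForm0.sem, counterVal]

theorem not_iDer0_zeroF1_zeroF2 (σ : Sig I) (a : I) :
    ¬ IDer0 σ (.pair (.leaf (zeroF1 a)) (.leaf zeroF2)) (.atom 2) := fun h =>
  one_notMem_sem_atom_two <| h.sem_subset counterVal <|
    Set.mem_mul.2 ⟨1, one_mem_sem_zeroF1 a, 1, one_mem_sem_zeroF2, mul_one 1⟩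

end Semantics

namespace CDer

variable {I : Type} {σ : Sig I} {b : Bool}

theorem relocate (R : Ctx2 (CForm I)) {Δ : Struct (CForm I)} (hC : QAll σ .C Δ)
    (hW : QAll σ .W Δ) (h : CDer σ b ((R.fillFst Δ).fill .emp)) :
    CDer σ b ((R.fillFst .emp).fill Δ) :=
  qC R hC (qW (R.fillFst Δ) hW h)

theorem tensor_par_top (Δ : Struct (CForm I)) (r : ℕ) (F : CForm I) :
    CDer σ b (((Struct.leaf (.pos r)).comma Δ).comma (.leaf (.tensor (.par .top F) (.neg r)))) :=
  tensor (initP r) (par (.pairR Δ .hole) (top (.pairR Δ (.pairL .hole (.leaf F)))))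

theorem quest_tensor_par_top (a : I) (Δ : Struct (CForm I)) (p r : ℕ) (F : CForm I) :
    CDer σ b ((((Struct.leaf (.pos r)).comma Δ).comma (.leaf (.neg p))).comma
      (.leaf (.quest a (.tensor (.pos p) (.tensor (.par .top F) (.neg r)))))) :=
  der (.pairR (((Struct.leaf (.pos r)).comma Δ).comma (.leaf (.neg p))) .hole)
    (tensor (tensor_par_top Δ r F) (initN p))

theorem top_tensor_par {a : I} {A B G N : CForm I} (hC : SubAx.C ∈ σ.f a) (hW : SubAx.W ∈ σ.f a)
    (h : CDer σ b (.pair (.pair (.pair (.leaf A) (.leaf B)) (.leaf N)) (.leaf (.quest a G)))) :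
    CDer σ b (.pair (.pair (.leaf (.tensor .top (.par B N))) (.leaf (.quest a G))) (.leaf A)) := by
  let Q : Struct (CForm I) := .leaf (.quest a G)
  have hinner : CDer σ b (.pair (.leaf A) (.pair (.leaf B) (.pair (.leaf N) Q))) :=
    assoc₂ (Γ := .leaf A) (Δ := .leaf B) (Θ := .pair (.leaf N) Q)
      (assoc₂ (Γ := .pair (.leaf A) (.leaf B)) (Δ := .leaf N) (Θ := Q) h)
  have houter : CDer σ b (.pair (.pair Q (.leaf A)) (.pair (.leaf B) (.leaf N))) :=
    relocate (.splitRL (.pairL .hole (.leaf A)) (.pairR (.leaf B) (.pairR (.leaf N) .hole)))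
      (.leaf hC) (.leaf hW) hinner
  have hpar : CDer σ b (.pair (.pair Q (.leaf A)) (.leaf (.par B N))) :=
    par (.pairR (.pair Q (.leaf A)) .hole) houter
  have htensor : CDer σ b (.pair (.pair Q (.leaf A)) (.leaf (.tensor .top (.par B N)))) :=
    tensor (Γ := .pair Q (.leaf A)) (Δ := .emp) hpar (top .hole)
  exact assoc₁ (Δ := Q) (Θ := .leaf A) (exch (Γ := .leaf (.tensor .top (.par B N))) htensor)

end CDer

theorem negTrans0_zeroF1_zeroF2 {I : Type} (a : I) :
    negTrans0 (.pair (.leaf (zeroF1 a)) (.leaf zeroF2)) =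
      .pair (.leaf (.tensor .top (.par (.pos 3) (.neg 0))))
        (.leaf (.quest a (.tensor (.pos 0) (.tensor (.par .top (.pos 1)) (.neg 2))))) :=
  rfl

theorem incompleteness_zero_general {I : Type} (σ : Sig I) (a : I)
    (hc : SubAx.C ∈ σ.f a) (hw : SubAx.W ∈ σ.f a) :
    ¬ IDer0 σ (.pair (.leaf (zeroF1 a)) (.leaf zeroF2)) (.atom 2) ∧
    CDer σ false
      ((negTrans0 (Struct.pair (.leaf (zeroF1 a)) (.leaf zeroF2))).comma
        (.leaf ((IForm0.atom 2 : IForm0 I).pos))) := by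
  refine ⟨not_iDer0_zeroF1_zeroF2 σ a, ?_⟩
  rw [negTrans0_zeroF1_zeroF2]
  exact CDer.top_tensor_par hc hw (CDer.quest_tensor_par_top a (.leaf (.pos 3)) 0 2 (.pos 1))

/-- **Incompleteness with the additive constant 0.**  Let acLL be extended
with `0` and the rule `0L`, and let the label `a` satisfy `C, W, E ∈ f(a)`.
The sequent `!ᵃ((r←(0→q))←p), (s←p)→0 ⊢ r` is not provable in the extended
intuitionistic system, yet its translation
`⊢ ((⊤⊗(s⅋p⊥), ?ᵃ(p⊗((⊤⅋q)⊗r⊥))), r)` is provable in CacLL.  Hence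
conservativity fails in the presence of `0`. -/
theorem incompleteness_zero {I : Type} (σ : Sig I) (a : I)
    (hc : SubAx.C ∈ σ.f a) (hw : SubAx.W ∈ σ.f a) (he : SubAx.E ∈ σ.f a) :
    ¬ IDer0 σ (.pair (.leaf (zeroF1 a)) (.leaf zeroF2)) (.atom 2) ∧
    CDer σ false
      ((negTrans0 (Struct.pair (.leaf (zeroF1 a)) (.leaf zeroF2))).comma
        (.leaf ((IForm0.atom 2 : IForm0 I).pos))) :=
  incompleteness_zero_general σ a hc hw

end NACLL
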